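/- For q = 2^s with s ≥ 5: for every β ∈ F_q, the diagonal matrices U_β^{(3)} and U_β^{(5)} belong to the Clifford group 𝒞; and for every β ∈ F_q with β ≠ 0, neither U_β^{(3)} nor U_β^{(5)} belongs to the Pauli group 𝒫. -/

import Mathlib

noncomputable section

/-- The trace map `tr : F_{2^s} → F_2 ⊆ F_{2^s}`, `tr γ = Σ_{i=0}^{s-1} γ^{2^i}`
(its values lie in the prime field `{0, 1}`). -/
def trF {F : Type} [Field F] (s : ℕ) (x : F) : F := ∑ i ∈ Finset.range s, x ^ 2 ^ i

/-- `ε ∘ tr : F_{2^s} → ℂ`, where `ε 0 = 1` and `ε 1 = -1` on the prime field `F_2`. -/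
def epsTr {F : Type} [Field F] [DecidableEq F] (s : ℕ) (x : F) : ℂ := if trF s x = 0 then 1 else -1

/-- The Pauli `X^β`: `(X^β)_{η,η'} = 1` if `η = η' + β`, else `0`. -/
def Xm {F : Type} [Field F] [Fintype F] [DecidableEq F] (β : F) : Matrix F F ℂ :=
  Matrix.of fun η η' => if η = η' + β then 1 else 0

/-- The Pauli `Z^γ`: diagonal with entry `ε(tr(γη))` at `η`. -/
def Zm {F : Type} [Field F] [Fintype F] [DecidableEq F] (s : ℕ) (γ : F) : Matrix F F ℂ :=
  Matrix.diagonal fun η => epsTr s (γ * η)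

/-- The diagonal gate `U_β^{(n)}` with diagonal entry `ε(tr(β η^n))` at `η`. -/
def Um {F : Type} [Field F] [Fintype F] [DecidableEq F] (s : ℕ) (n : ℕ) (β : F) :
    Matrix F F ℂ :=
  Matrix.diagonal fun η => epsTr s (β * η ^ n)

/-- The single-qudit Pauli group (as a set of matrices):
`{z • X^β Z^γ : z ∈ {1, i, −1, −i}, β, γ ∈ F_q}`. -/
def PauliSet (s : ℕ) (F : Type) [Field F] [Fintype F] [DecidableEq F] :
    Set (Matrix F F ℂ) :=
  {M | ∃ z ∈ ({1, Complex.I, -1, -Complex.I} : Set ℂ), ∃ β γ : F, M = z • (Xm β * Zm s γ)}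

/-- The single-qudit Clifford group: unitaries normalising the Pauli group. -/
def CliffordSet (s : ℕ) (F : Type) [Field F] [Fintype F] [DecidableEq F] :
    Set (Matrix F F ℂ) :=
  {U | U ∈ unitary (Matrix F F ℂ) ∧ ∀ P ∈ PauliSet s F, U * P * star U ∈ PauliSet s F}

/-- The third level of the Clifford hierarchy: unitaries mapping Paulis into the
Clifford group under conjugation. -/
def ThirdLevelSet (s : ℕ) (F : Type) [Field F] [Fintype F] [DecidableEq F] :
    Set (Matrix F F ℂ) :=
  {U | U ∈ unitary (Matrix F F ℂ) ∧ ∀ P ∈ PauliSet s F, U * P * star U ∈ CliffordSet s F}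

/-!
Let `χ = ε ∘ tr` and `q = 2^k`. Expanding `(x + b)^(q+1)` leaves the cross terms `x^q b` and
`x b^q`, and Frobenius invariance of the trace makes both of them linear in `x` under `χ`: if
`d^q = β b` then `χ(β (x+b)^(q+1)) = χ(β x^(q+1)) χ(β b^(q+1)) χ((d + β b^q) x)`. This identity says
that the gate `U_β^{(q+1)}` conjugates `X^b` to `± X^b Z^(d + β b^q)`, so the gate is Clifford. If
the gate were also Pauli, then `χ(β x^(q+1)) = χ(c x)` for some `c`, which forces `d + β b^q = 0`
for every `b`. Raised to the power `q`, this reads `β b + β^q b^(q^2) = 0`. If `β ≠ 0`, comparing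
with `b = 1` gives `b^(q^2) = b` on the whole field, hence `s ∣ 2k`; but `2k < s` for `k = 1, 2` and
`s ≥ 5`.
-/

open Matrix

section FrobeniusInvariantChar

variable {K R : Type*} {p : ℕ}

theorem addChar_pow_char_pow [Semiring K] [Monoid R] {χ : AddChar K R}
    (hχ : ∀ x, χ (x ^ p) = χ x) (k : ℕ) (x : K) : χ (x ^ p ^ k) = χ x := by
  induction k with
  | zero => simp
  | succ k ih => rw [pow_succ, pow_mul, hχ, ih]

theorem addChar_mul_add_pow_succ [CommSemiring K] [ExpChar K p] [Monoid R] {χ : AddChar K R}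
    (hχ : ∀ x, χ (x ^ p) = χ x) {k : ℕ} {β b d : K} (hd : d ^ p ^ k = β * b) (x : K) :
    χ (β * (x + b) ^ (p ^ k + 1)) =
      χ (β * x ^ (p ^ k + 1)) * χ (β * b ^ (p ^ k + 1)) * χ ((d + β * b ^ p ^ k) * x) := by
  have expand : β * (x + b) ^ (p ^ k + 1) =
      β * x ^ (p ^ k + 1) + β * b ^ (p ^ k + 1) + ((d * x) ^ p ^ k + β * b ^ p ^ k * x) := by
    rw [pow_succ, add_pow_expChar_pow, mul_pow, hd]
    ring
  rw [expand, AddChar.map_add_eq_mul, AddChar.map_add_eq_mul, AddChar.map_add_eq_mul,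
    addChar_pow_char_pow hχ, ← AddChar.map_add_eq_mul χ (d * x), add_mul]

theorem add_pow_mul_pow_eq_zero_of_addChar_eq [CommRing K] [ExpChar K p] [PerfectRing K p]
    [CommMonoid R] {χ : AddChar K R} (hprim : χ.IsPrimitive) (hχ : ∀ x, χ (x ^ p) = χ x)
    {k : ℕ} {β c : K} (h : ∀ x, χ (β * x ^ (p ^ k + 1)) = χ (c * x)) (b : K) :
    β * b + β ^ p ^ k * b ^ p ^ (2 * k) = 0 := by
  obtain ⟨d, hd⟩ : ∃ d, d ^ p ^ k = β * b := (bijective_iterateFrobenius K p k).surjective _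
  have cross_term_trivial : d + β * b ^ p ^ k = 0 := by
    by_contra hne
    refine hprim hne (DFunLike.ext _ _ fun x => ?_)
    have polar := addChar_mul_add_pow_succ hχ hd x
    rw [h, h, h, mul_add, AddChar.map_add_eq_mul] at polar
    exact ((χ.val_isUnit _).mul (χ.val_isUnit _)).mul_eq_left.1 polar.symm
  calc β * b + β ^ p ^ k * b ^ p ^ (2 * k) = (d + β * b ^ p ^ k) ^ p ^ k := by
        rw [add_pow_expChar_pow, hd, mul_pow, ← pow_mul, ← pow_add, two_mul]
    _ = 0 := by rw [cross_term_trivial, zero_pow (expChar_pow_pos K p k).ne']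

theorem pow_eq_self_of_addChar_eq [CommRing K] [IsDomain K] [ExpChar K p] [PerfectRing K p]
    [CommMonoid R] {χ : AddChar K R} (hprim : χ.IsPrimitive) (hχ : ∀ x, χ (x ^ p) = χ x)
    {k : ℕ} {β c : K} (hβ : β ≠ 0) (h : ∀ x, χ (β * x ^ (p ^ k + 1)) = χ (c * x)) (b : K) :
    b ^ p ^ (2 * k) = b := by
  have at_b := add_pow_mul_pow_eq_zero_of_addChar_eq hprim hχ h b
  have at_one : β + β ^ p ^ k = 0 := by
    simpa using add_pow_mul_pow_eq_zero_of_addChar_eq hprim hχ h 1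
  refine mul_left_cancel₀ hβ ?_
  linear_combination b ^ p ^ (2 * k) * at_one - at_b

end FrobeniusInvariantChar

theorem finrank_eq_of_card_eq_pow {K V : Type*} [DivisionRing K] [Fintype K] [AddCommGroup V]
    [Module K V] [Fintype V] {m : ℕ} (h : Fintype.card V = Fintype.card K ^ m) :
    Module.finrank K V = m := by
  rw [Module.card_eq_pow_finrank (K := K)] at h
  exact Nat.pow_right_injective Fintype.one_lt_card h

theorem finrank_dvd_of_forall_pow_eq_self (K L : Type*) [Field K] [Fintype K] [Field L] [Finite L]
    [Algebra K L] {m : ℕ} (h : ∀ x : L, x ^ Fintype.card K ^ m = x) :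
    Module.finrank K L ∣ m := by
  rw [← FiniteField.orderOf_frobeniusAlgHom]
  refine orderOf_dvd_of_pow_eq_one (AlgHom.ext fun x => ?_)
  simpa only [AlgHom.coe_pow, FiniteField.coe_frobeniusAlgHom, pow_iterate,
    AlgHom.one_apply] using h x

theorem trace_pow_card (K L : Type*) [Field K] [Fintype K] [Field L] [Algebra K L]
    [Algebra.IsAlgebraic K L] (x : L) :
    Algebra.trace K L (x ^ Fintype.card K) = Algebra.trace K L x :=
  Algebra.trace_eq_of_algEquiv (FiniteField.frobeniusAlgEquivOfAlgebraic K L) x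

section SignTrace

/-- The additive character `ε ∘ tr` of an extension `K` of `F_2`, with `tr` the field trace.
It agrees with `epsTr` (see `epsTr_eq_signTrace`) and is bundled, so that additivity and
primitivity are available from the theory of `AddChar`. -/
def signTrace (K : Type*) [Field K] [Algebra (ZMod 2) K] : AddChar K ℂ :=
  (AddChar.zmodChar 2 (neg_one_sq (R := ℂ))).compAddMonoidHom
    (Algebra.trace (ZMod 2) K).toAddMonoidHom

variable {K : Type*} [Field K] [Algebra (ZMod 2) K]

theorem signTrace_apply (x : K) :
    signTrace K x = if Algebra.trace (ZMod 2) K x = 0 then 1 else -1 := by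
  have zmodChar_eq : ∀ t : ZMod 2,
      AddChar.zmodChar 2 (neg_one_sq (R := ℂ)) t = if t = 0 then 1 else -1 := by
    intro t
    obtain rfl | rfl : t = 0 ∨ t = 1 := by decide +revert
    all_goals simp [AddChar.zmodChar_apply, ZMod.val_one]
  exact zmodChar_eq _

variable [Finite K]

theorem signTrace_sq (x : K) : signTrace K (x ^ 2) = signTrace K x := by
  rw [signTrace_apply, signTrace_apply, ← trace_pow_card (ZMod 2) K x, ZMod.card]

theorem signTrace_isPrimitive : (signTrace K).IsPrimitive := by
  refine AddChar.IsPrimitive.of_ne_one fun h => ?_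
  obtain ⟨x, hx⟩ := Algebra.trace_surjective (ZMod 2) K 1
  have : signTrace K x = 1 := by rw [h, AddChar.one_apply]
  rw [signTrace_apply, hx] at this
  norm_num at this

theorem finrank_dvd_of_signTrace_eq {k : ℕ} {β c : K} (hβ : β ≠ 0)
    (h : ∀ x, signTrace K (β * x ^ (2 ^ k + 1)) = signTrace K (c * x)) :
    Module.finrank (ZMod 2) K ∣ 2 * k := by
  have : CharP K 2 := charP_of_injective_algebraMap (algebraMap (ZMod 2) K).injective 2
  refine finrank_dvd_of_forall_pow_eq_self (ZMod 2) K fun x => ?_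
  rw [ZMod.card]
  exact pow_eq_self_of_addChar_eq signTrace_isPrimitive signTrace_sq hβ h x

end SignTrace

theorem trF_eq_trace {F : Type} [Field F] [Fintype F] [Algebra (ZMod 2) F] {s : ℕ}
    (hF : Fintype.card F = 2 ^ s) (x : F) :
    trF s x = algebraMap (ZMod 2) F (Algebra.trace (ZMod 2) F x) := by
  have finrank_eq : Module.finrank (ZMod 2) F = s :=
    finrank_eq_of_card_eq_pow (by rw [ZMod.card, hF])
  rw [FiniteField.algebraMap_trace_eq_sum_pow, finrank_eq, Nat.card_zmod, trF]

section Gates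

variable {F : Type} [Field F] [DecidableEq F] {s : ℕ}

theorem epsTr_zero : epsTr s (0 : F) = 1 := by
  simp [epsTr, trF]

theorem epsTr_mul_self (x : F) : epsTr s x * epsTr s x = 1 := by
  unfold epsTr
  split_ifs <;> simp

theorem star_epsTr (x : F) : star (epsTr s x) = epsTr s x := by
  unfold epsTr
  split_ifs <;> simp

theorem mul_epsTr_mem_phases {z : ℂ} (hz : z ∈ ({1, Complex.I, -1, -Complex.I} : Set ℂ)) (x : F) :
    z * epsTr s x ∈ ({1, Complex.I, -1, -Complex.I} : Set ℂ) := by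
  unfold epsTr
  simp only [Set.mem_insert_iff, Set.mem_singleton_iff] at hz ⊢
  split_ifs <;> rcases hz with rfl | rfl | rfl | rfl <;> simp

variable [Fintype F]

theorem star_Um (n : ℕ) (β : F) : star (Um s n β) = Um s n β := by
  simp only [Um, star_eq_conjTranspose, diagonal_conjTranspose, Pi.star_def, star_epsTr]

theorem Um_mul_self (n : ℕ) (β : F) : Um s n β * Um s n β = 1 := by
  simp only [Um, diagonal_mul_diagonal, epsTr_mul_self, diagonal_one]

theorem Um_mem_unitary (n : ℕ) (β : F) : Um s n β ∈ unitary (Matrix F F ℂ) := by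
  rw [Unitary.mem_iff, star_Um, and_self, Um_mul_self]

theorem Um_mul_Zm (n : ℕ) (β γ : F) : Um s n β * Zm s γ = Zm s γ * Um s n β :=
  commute_diagonal _ _

theorem diagonal_mul_Xm (f : F → ℂ) (b : F) :
    diagonal f * Xm b = Xm b * diagonal fun x => f (x + b) := by
  ext i j
  by_cases h : i = j + b <;> simp [Xm, h]

theorem exists_eq_mul_epsTr_of_diagonal_mem_PauliSet {f : F → ℂ} (hf0 : f 0 ≠ 0)
    (hf : diagonal f ∈ PauliSet s F) : ∃ c, ∀ x, f x = f 0 * epsTr s (c * x) := by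
  obtain ⟨z, -, b, c, h⟩ := hf
  have entry (x : F) : f x = z * ((if x = x + b then 1 else 0) * epsTr s (c * x)) := by
    simpa [Xm, Zm] using congrFun₂ h x x
  have hb : b = 0 := by
    by_contra hb
    exact hf0 (by simp [entry 0, Ne.symm hb])
  have hz : f 0 = z := by simp [entry 0, hb, epsTr_zero]
  exact ⟨c, fun x => by simpa [hb, ← hz] using entry x⟩

theorem epsTr_eq_signTrace [Algebra (ZMod 2) F] (hF : Fintype.card F = 2 ^ s) (x : F) :
    epsTr s x = signTrace F x := by
  simp only [epsTr, signTrace_apply, trF_eq_trace hF, map_eq_zero]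

theorem Zm_mul_Zm [Algebra (ZMod 2) F] (hF : Fintype.card F = 2 ^ s) (γ δ : F) :
    Zm s γ * Zm s δ = Zm s (γ + δ) := by
  simp only [Zm, diagonal_mul_diagonal, epsTr_eq_signTrace hF, add_mul, AddChar.map_add_eq_mul]

theorem Um_mul_Xm [Algebra (ZMod 2) F] (hF : Fintype.card F = 2 ^ s) {k : ℕ} {β b d : F}
    (hd : d ^ 2 ^ k = β * b) :
    Um s (2 ^ k + 1) β * Xm b = epsTr s (β * b ^ (2 ^ k + 1)) •
      (Xm b * Zm s (d + β * b ^ 2 ^ k) * Um s (2 ^ k + 1) β) := by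
  have : CharP F 2 := charP_of_injective_algebraMap (algebraMap (ZMod 2) F).injective 2
  rw [Um, diagonal_mul_Xm, Zm, mul_assoc, diagonal_mul_diagonal, ← mul_smul_comm, ← diagonal_smul]
  congr 2 with x
  simp only [epsTr_eq_signTrace hF, addChar_mul_add_pow_succ signTrace_sq hd x, Pi.smul_apply,
    smul_eq_mul]
  ring

theorem Um_mem_CliffordSet [Algebra (ZMod 2) F] (hF : Fintype.card F = 2 ^ s) (k : ℕ) (β : F) :
    Um s (2 ^ k + 1) β ∈ CliffordSet s F := by
  have : CharP F 2 := charP_of_injective_algebraMap (algebraMap (ZMod 2) F).injective 2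
  refine ⟨Um_mem_unitary _ _, ?_⟩
  rintro _ ⟨z, hz, b, c, rfl⟩
  obtain ⟨d, hd⟩ : ∃ d, d ^ 2 ^ k = β * b := (bijective_iterateFrobenius F 2 k).surjective _
  set U := Um s (2 ^ k + 1) β
  have star_U : star U = U := star_Um _ _
  have U_mul_U : U * U = 1 := Um_mul_self _ _
  have U_mul_Zm : U * Zm s c = Zm s c * U := Um_mul_Zm _ _ _
  set e := d + β * b ^ 2 ^ k
  set sign := epsTr s (β * b ^ (2 ^ k + 1))
  refine ⟨z * sign, mul_epsTr_mem_phases hz _, b, e + c, ?_⟩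
  calc U * z • (Xm b * Zm s c) * star U
      = z • (U * Xm b * Zm s c * U) := by
        rw [star_U, mul_smul_comm, smul_mul_assoc, mul_assoc U (Xm b)]
    _ = (z * sign) • (Xm b * Zm s e * (U * Zm s c) * U) := by
        rw [Um_mul_Xm hF hd, smul_mul_assoc, smul_mul_assoc, smul_smul, mul_assoc _ U]
    _ = (z * sign) • (Xm b * (Zm s e * Zm s c) * (U * U)) := by
        simp only [U_mul_Zm, mul_assoc]
    _ = (z * sign) • (Xm b * Zm s (e + c)) := by
        rw [Zm_mul_Zm hF, U_mul_U, mul_one]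

theorem Um_notMem_PauliSet [Algebra (ZMod 2) F] (hF : Fintype.card F = 2 ^ s) {k : ℕ}
    (hk : ¬ s ∣ 2 * k) {β : F} (hβ : β ≠ 0) : Um s (2 ^ k + 1) β ∉ PauliSet s F := by
  intro h
  obtain ⟨c, hc⟩ := exists_eq_mul_epsTr_of_diagonal_mem_PauliSet (by simp [epsTr_zero]) h
  have finrank_eq : Module.finrank (ZMod 2) F = s :=
    finrank_eq_of_card_eq_pow (by rw [ZMod.card, hF])
  rw [← finrank_eq] at hk
  refine hk (finrank_dvd_of_signTrace_eq hβ (c := c) fun x => ?_)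
  simpa [epsTr_zero, epsTr_eq_signTrace hF] using hc x

end Gates

theorem U3_U5_clifford_not_pauli_general
    {s : ℕ} {F : Type} [Field F] [Fintype F] [DecidableEq F]
    (hF : Fintype.card F = 2 ^ s) (k : ℕ) :
    (∀ β : F, Um s (2 ^ k + 1) β ∈ CliffordSet s F) ∧
    (¬ s ∣ 2 * k → ∀ β : F, β ≠ 0 → Um s (2 ^ k + 1) β ∉ PauliSet s F) := by
  have : CharP F 2 := charP_of_card_eq_prime_pow hF
  let : Algebra (ZMod 2) F := ZMod.algebra F 2
  exact ⟨Um_mem_CliffordSet hF k, fun hk _ hβ => Um_notMem_PauliSet hF hk hβ⟩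

/-- For `q = 2^s` with `s ≥ 5`: every `U_β^{(3)}` and `U_β^{(5)}` is Clifford, and for
`β ≠ 0` neither is a Pauli. -/
theorem U3_U5_clifford_not_pauli
    {s : ℕ} (hs : 5 ≤ s) {F : Type} [Field F] [Fintype F] [DecidableEq F]
    (hF : Fintype.card F = 2 ^ s) :
    (∀ β : F, Um s 3 β ∈ CliffordSet s F ∧ Um s 5 β ∈ CliffordSet s F) ∧
    (∀ β : F, β ≠ 0 → Um s 3 β ∉ PauliSet s F ∧ Um s 5 β ∉ PauliSet s F) := by
  obtain ⟨clifford3, pauli3⟩ := U3_U5_clifford_not_pauli_general hF 1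
  obtain ⟨clifford5, pauli5⟩ := U3_U5_clifford_not_pauli_general hF 2
  exact ⟨fun β => ⟨clifford3 β, clifford5 β⟩, fun β hβ =>
    ⟨pauli3 (Nat.not_dvd_of_pos_of_lt (by omega) (by omega)) β hβ,
      pauli5 (Nat.not_dvd_of_pos_of_lt (by omega) (by omega)) β hβ⟩⟩
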